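/- For κ > 0 and c ∈ ℝ, the smallest positive time T at which cos(κT) + (c/(2κ))·sin(κT) = 0 is T = π/(2κ) + (1/κ)·arctan(c/(2κ)). In particular T is positive and finite, so the solution of the Fisher-Rao Euler-Arnold flow breaks down in finite time. -/

import Mathlib

open Real

/-!
By the harmonic addition formula, `cos θ + x sin θ` is a positive multiple of `cos (θ - arctan x)`.
The phase `arctan x` lies in `(-π/2, π/2)`, so `θ = 0` lies in the positive arch of this shifted
cosine, and the first positive zero is the right end of the arch, `θ = arctan x + π/2`. Here
`θ = κt` and `x = c/(2κ)`.
-/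

theorem cos_add_mul_sin_eq_sqrt_mul_cos_sub_arctan (x θ : ℝ) :
    cos θ + x * sin θ = √(1 + x ^ 2) * cos (θ - arctan x) := by
  rw [cos_sub, cos_arctan, sin_arctan]
  field_simp

theorem cos_add_mul_sin_arctan_add_pi_div_two (x : ℝ) :
    cos (arctan x + π / 2) + x * sin (arctan x + π / 2) = 0 := by
  rw [cos_add_mul_sin_eq_sqrt_mul_cos_sub_arctan, add_sub_cancel_left, cos_pi_div_two, mul_zero]

theorem cos_add_mul_sin_pos {x θ : ℝ} (hlo : arctan x - π / 2 < θ) (hhi : θ < arctan x + π / 2) :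
    0 < cos θ + x * sin θ := by
  rw [cos_add_mul_sin_eq_sqrt_mul_cos_sub_arctan]
  have hcos : 0 < cos (θ - arctan x) := cos_pos_of_mem_Ioo ⟨by linarith, by linarith⟩
  positivity

/-- For `κ > 0` and `c ∈ ℝ`, the time `T = π/(2κ) + (1/κ) arctan(c/(2κ))` is positive,
it satisfies `cos(κT) + (c/(2κ)) sin(κT) = 0`, and it is the smallest positive time with
this property: the solution of the Fisher-Rao Euler-Arnold flow breaks down in finite time. -/
theorem fisherRao_breakdown_time (κ c : ℝ) (hκ : 0 < κ)
    (T : ℝ) (hT : T = π / (2 * κ) + (1 / κ) * arctan (c / (2 * κ))) :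
    0 < T ∧
    cos (κ * T) + (c / (2 * κ)) * sin (κ * T) = 0 ∧
    ∀ t : ℝ, 0 < t → t < T → cos (κ * t) + (c / (2 * κ)) * sin (κ * t) ≠ 0 := by
  have hκT : κ * T = arctan (c / (2 * κ)) + π / 2 := by
    rw [hT]
    field_simp
    ring
  refine ⟨?_, ?_, fun t ht htT => ?_⟩
  · have hpos : 0 < κ * T := by linarith [neg_pi_div_two_lt_arctan (c / (2 * κ))]
    exact pos_of_mul_pos_right hpos hκ.le
  · rw [hκT]
    exact cos_add_mul_sin_arctan_add_pi_div_two _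
  · have hlo : arctan (c / (2 * κ)) - π / 2 < κ * t := by
      linarith [arctan_lt_pi_div_two (c / (2 * κ)), mul_pos hκ ht]
    have hhi : κ * t < arctan (c / (2 * κ)) + π / 2 := hκT ▸ mul_lt_mul_of_pos_left htT hκ
    exact (cos_add_mul_sin_pos hlo hhi).ne'
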